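/- arXiv:2509.10263 — 6 statements merged into one kernel-verified Lean document; each statement's English description precedes it below -/
import Mathlib

section
/- Let F be a logarithmically homogeneous barrier with negative curvature for a regular cone K ⊂ ℝⁿ. Then for all x ∈ int K and all h ∈ ℝⁿ, the directional third derivative satisfies −2σₓ(h)·F''(x) ⪯ F'''(x;h) ⪯ 2σₓ(−h)·F''(x), as an inequality of symmetric bilinear forms. -/
open scoped RealInnerProductSpace
open Set

noncomputable section

variable {E : Type*} [NormedAddCommGroup E] [InnerProductSpace ℝ E] [CompleteSpace E]

/-- The dual cone `K* = {s : ⟨s,x⟩ ≥ 0 for all x ∈ K}`. -/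
def dualCone (K : Set E) : Set E := {s | ∀ x ∈ K, 0 ≤ ⟪s, x⟫}

/-- `K` is a regular cone: closed, convex, a cone, pointed, with nonempty interior. -/
def IsRegularCone (K : Set E) : Prop :=
  IsClosed K ∧ Convex ℝ K ∧ (∀ x ∈ K, ∀ t : ℝ, 0 ≤ t → t • x ∈ K) ∧
    (∀ x, x ∈ K → -x ∈ K → x = 0) ∧ (interior K).Nonempty

/-- The Minkowski gauge `σ_x(h) = inf {β ≥ 0 : β • x - h ∈ K}`. -/
def mink (K : Set E) (x h : E) : ℝ := sInf {β : ℝ | 0 ≤ β ∧ β • x - h ∈ K}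

/-- The Hessian `F''(x)` of `F` at `x`, as a continuous linear map. -/
def Hess (F : E → ℝ) (x : E) : E →L[ℝ] E := fderiv ℝ (fun y => gradient F y) x

/-- The directional third derivative `F'''(x;h)`: the directional derivative of the Hessian
of `F` at `x` in the direction `h`, as a continuous linear map. -/
def D3 (F : E → ℝ) (x h : E) : E →L[ℝ] E := fderiv ℝ (fun y => Hess F y) x h

/-- The local norm `‖h‖ₓ = ⟨F''(x) h, h⟩^{1/2}`. -/
def localNorm (F : E → ℝ) (x h : E) : ℝ := Real.sqrt ⟪Hess F x h, h⟫

/-- `F` is a ϑ-logarithmically homogeneous barrier for `K`: a three times continuously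
differentiable convex function on `int K`, with positive definite Hessians, satisfying
`F (t • x) = F x - ϑ ln t`. -/
structure IsLHB (K : Set E) (ϑ : ℝ) (F : E → ℝ) : Prop where
  contDiff : ContDiffOn ℝ 3 F (interior K)
  convexOn : ConvexOn ℝ (interior K) F
  hess_posdef : ∀ x ∈ interior K, ∀ v : E, v ≠ 0 → 0 < ⟪Hess F x v, v⟫
  log_hom : ∀ x ∈ interior K, ∀ t : ℝ, 0 < t → F (t • x) = F x - ϑ * Real.log t

/-- `F` has negative curvature: `x ↦ ⟨F'(x), u⟩` is concave on `int K` for every `u ∈ K`. -/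
def NegCurv (K : Set E) (F : E → ℝ) : Prop :=
  ∀ u ∈ K, ConcaveOn ℝ (interior K) (fun x => ⟪gradient F x, u⟫)

/-!
Write `D³F(x)[a, b, c]` for the third derivative as a trilinear form. It is symmetric, so negative
curvature says that `D³F(x)[u, v, v] ≤ 0` for all `u ∈ K`. Differentiating the homogeneity relation
twice shows that `D²F` is homogeneous of degree `-2`, so Euler's identity gives
`D³F(x)[x, v, v] = -2 D²F(x)[v, v]`. Taking `u = x` shows that `D²F(x)` is positive semidefinite,
and taking `u = β x - h ∈ K` gives `-2 β D²F(x)[v, v] ≤ D³F(x)[h, v, v]`; the infimum over `β` is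
the lower bound, and the upper bound is the lower bound for `-h`.
-/

open Filter Topology
open scoped ContDiff

section Homogeneous

variable {V W : Type*} [NormedAddCommGroup V] [NormedSpace ℝ V]
  [NormedAddCommGroup W] [NormedSpace ℝ W] {g : V → W} {S : Set V} {k : ℤ} {x : V}

/-- `g` is positively homogeneous of integer degree `k` at the points of `S`. The set `S` is not
required to be a cone: `g` is evaluated at `t • x` for every `t > 0`, inside `S` or not. -/
def HomogeneousOn (k : ℤ) (g : V → W) (S : Set V) : Prop :=
  ∀ x ∈ S, ∀ t : ℝ, 0 < t → g (t • x) = t ^ k • g x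

protected theorem HomogeneousOn.fderiv (hS : IsOpen S) (hg : HomogeneousOn k g S) :
    HomogeneousOn (k - 1) (fderiv ℝ g) S := by
  intro x hx t ht
  have hcongr : (fun y => g (t • y)) =ᶠ[𝓝 x] t ^ k • g := by
    filter_upwards [hS.mem_nhds hx] with y hy using hg y hy t ht
  have hscaled : t • fderiv ℝ g (t • x) = t ^ k • fderiv ℝ g x := by
    rw [← fderiv_comp_smul, hcongr.fderiv_eq, fderiv_const_smul_field, Pi.smul_apply]
  rw [zpow_sub_one₀ ht.ne', mul_comm, mul_smul, ← hscaled, inv_smul_smul₀ ht.ne']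

theorem HomogeneousOn.fderiv_apply_self (hg : HomogeneousOn k g S) (hx : x ∈ S)
    (hd : DifferentiableAt ℝ g x) : fderiv ℝ g x x = (k : ℝ) • g x := by
  have hray : HasDerivAt (fun t : ℝ => t • x) x 1 := by
    simpa using (hasDerivAt_id (1 : ℝ)).smul_const x
  have hleft : HasDerivAt (fun t : ℝ => g (t • x)) (fderiv ℝ g x x) 1 :=
    HasFDerivAt.comp_hasDerivAt (1 : ℝ) (by simpa using hd.hasFDerivAt) hray
  have hright : HasDerivAt (fun t : ℝ => t ^ k • g x) ((k : ℝ) • g x) 1 := by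
    simpa using (hasDerivAt_zpow k (1 : ℝ) (.inl one_ne_zero)).smul_const (g x)
  have hcongr : (fun t : ℝ => g (t • x)) =ᶠ[𝓝 1] fun t => t ^ k • g x := by
    filter_upwards [lt_mem_nhds one_pos] with t ht using hg x hx t ht
  exact hleft.unique (hright.congr_of_eventuallyEq hcongr)

end Homogeneous

section SecondOrder

variable {V W : Type*} [NormedAddCommGroup V] [NormedSpace ℝ V]
  [NormedAddCommGroup W] [InnerProductSpace ℝ W]

theorem fderiv_fderiv_apply_self_nonpos_of_concaveOn {f : V → ℝ} {f' : V → V →L[ℝ] ℝ}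
    {f'' : V →L[ℝ] V →L[ℝ] ℝ} {S : Set V} {x : V} (hS : IsOpen S) (hf : ConcaveOn ℝ S f)
    (hf' : ∀ y ∈ S, HasFDerivAt f (f' y) y) (hx : x ∈ S) (hf'' : HasFDerivAt f' f'' x) (v : V) :
    f'' v v ≤ 0 := by
  let line : ℝ →ᵃ[ℝ] V := AffineMap.lineMap x (x + v)
  have line_zero : line 0 = x := AffineMap.lineMap_apply_zero _ _
  have hline (t : ℝ) : HasDerivAt line v t := by
    simpa [line] using AffineMap.hasDerivAt_lineMap (a := x) (b := x + v) (x := t)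
  have hT : IsOpen (line ⁻¹' S) :=
    hS.preimage (continuous_iff_continuousAt.2 fun t => (hline t).continuousAt)
  have h0 : (0 : ℝ) ∈ line ⁻¹' S := by rwa [mem_preimage, line_zero]
  have hderiv (t : ℝ) (ht : t ∈ line ⁻¹' S) : HasDerivAt (f ∘ line) (f' (line t) v) t :=
    (hf' _ ht).comp_hasDerivAt t (hline t)
  have hanti : AntitoneOn (fun t => f' (line t) v) (line ⁻¹' S) :=
    ((hf.comp_affineMap line).antitoneOn_deriv fun t ht => (hderiv t ht).differentiableAt).congr
      fun t ht => (hderiv t ht).deriv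
  have hderiv₂ : HasDerivAt (fun t => f' (line t) v) (f'' v v) 0 := by
    rw [← line_zero] at hf''
    simpa using (hf''.comp_hasDerivAt (0 : ℝ) (hline 0)).clm_apply (hasDerivAt_const (0 : ℝ) v)
  have hnonpos := hanti.derivWithin_nonpos (x := 0)
  rwa [derivWithin_of_isOpen hT h0, hderiv₂.deriv] at hnonpos

theorem isSymmetric_fderiv_apply {A : V → W →L[ℝ] W} {x : V} (hA : DifferentiableAt ℝ A x)
    (hsymm : ∀ᶠ y in 𝓝 x, (A y).toLinearMap.IsSymmetric) (u : V) :
    (fderiv ℝ A x u).toLinearMap.IsSymmetric := by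
  intro a b
  have hleft : HasFDerivAt (fun y => ⟪A y a, b⟫) _ x :=
    (hA.hasFDerivAt.clm_apply (hasFDerivAt_const a x)).inner ℝ (hasFDerivAt_const b x)
  have hright : HasFDerivAt (fun y => ⟪a, A y b⟫) _ x :=
    (hasFDerivAt_const a x).inner ℝ (hA.hasFDerivAt.clm_apply (hasFDerivAt_const b x))
  have hcongr : (fun y => ⟪A y a, b⟫) =ᶠ[𝓝 x] fun y => ⟪a, A y b⟫ :=
    hsymm.mono fun y hy => hy a b
  simpa using congr($(hleft.unique (hright.congr_of_eventuallyEq hcongr)) u)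

end SecondOrder

section Derivatives

variable {F : E → ℝ} {x : E}

theorem contDiffAt_gradient {m n : ℕ∞ω} (hF : ContDiffAt ℝ n F x) (hmn : m + 1 ≤ n) :
    ContDiffAt ℝ m (gradient F) x :=
  (InnerProductSpace.toDual ℝ E).symm.toContinuousLinearEquiv.contDiff.contDiffAt.comp x
    (hF.fderiv_right hmn)

theorem hasFDerivAt_gradient (hF : ContDiffAt ℝ 2 F x) :
    HasFDerivAt (gradient F) (Hess F x) x :=
  ((contDiffAt_gradient (m := 1) hF (by norm_num)).differentiableAt one_ne_zero).hasFDerivAt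

theorem differentiableAt_Hess (hF : ContDiffAt ℝ 3 F x) : DifferentiableAt ℝ (Hess F) x :=
  ((contDiffAt_gradient (m := 2) hF (by norm_num)).fderiv_right (m := 1)
    (by norm_num)).differentiableAt one_ne_zero

theorem inner_Hess_apply (hF : ContDiffAt ℝ 2 F x) (a b : E) :
    ⟪Hess F x a, b⟫ = fderiv ℝ (fderiv ℝ F) x a b := by
  have hfderiv : fderiv ℝ F = innerSL ℝ ∘ gradient F := by
    ext y w
    exact inner_gradient_left.symm
  rw [hfderiv, ((innerSL ℝ).hasFDerivAt.comp x (hasFDerivAt_gradient hF)).fderiv]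
  rfl

theorem isSymmetric_Hess (hF : ContDiffAt ℝ 2 F x) : (Hess F x).toLinearMap.IsSymmetric := by
  intro a b
  rw [real_inner_comm _ a, ContinuousLinearMap.coe_coe, inner_Hess_apply hF, inner_Hess_apply hF]
  exact (hF.isSymmSndFDerivAt (by simp)).eq a b

theorem D3_comm (hF : ContDiffAt ℝ 3 F x) (a b : E) : D3 F x a b = D3 F x b a :=
  ((contDiffAt_gradient (m := 2) hF (by norm_num)).isSymmSndFDerivAt (by simp)).eq a b

theorem isSymmetric_D3 (hF : ContDiffAt ℝ 3 F x) (h : E) :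
    (D3 F x h).toLinearMap.IsSymmetric := by
  have hF₂ : ContDiffAt ℝ 2 F x := hF.of_le (by norm_num)
  exact isSymmetric_fderiv_apply (differentiableAt_Hess hF)
    ((hF₂.eventually (by simp)).mono fun _ => isSymmetric_Hess) h

theorem inner_D3_rotate (hF : ContDiffAt ℝ 3 F x) (a b c : E) :
    ⟪D3 F x a b, c⟫ = ⟪D3 F x b c, a⟫ := by
  rw [D3_comm hF a b, real_inner_comm]
  exact (isSymmetric_D3 hF b c a).symm

end Derivatives

section Barrier

variable {K S : Set E} {F : E → ℝ} {c : ℝ → ℝ} {x : E}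

theorem NegCurv.inner_D3_nonpos (hNC : NegCurv K F) (hF : ContDiffOn ℝ 3 F (interior K))
    (hx : x ∈ interior K) {u : E} (hu : u ∈ K) (v : E) : ⟪D3 F x u v, v⟫ ≤ 0 := by
  have hF' (y : E) (hy : y ∈ interior K) : ContDiffAt ℝ 3 F y :=
    hF.contDiffAt (isOpen_interior.mem_nhds hy)
  have hderiv (y : E) (hy : y ∈ interior K) :
      HasFDerivAt (fun z => ⟪gradient F z, u⟫) (innerSL ℝ u ∘L Hess F y) y := by
    simpa only [Function.comp_def, innerSL_apply_apply, real_inner_comm] using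
      (innerSL ℝ u).hasFDerivAt.comp y (hasFDerivAt_gradient ((hF' y hy).of_le (by norm_num)))
  have hderiv₂ := (ContinuousLinearMap.compL ℝ E E ℝ (innerSL ℝ u)).hasFDerivAt.comp x
    (differentiableAt_Hess (hF' x hx)).hasFDerivAt
  rw [inner_D3_rotate (hF' x hx), real_inner_comm]
  exact fderiv_fderiv_apply_self_nonpos_of_concaveOn isOpen_interior (hNC u hu) hderiv hx hderiv₂ v

theorem homogeneousOn_gradient (hS : IsOpen S)
    (hF : ∀ x ∈ S, ∀ t : ℝ, 0 < t → F (t • x) = F x - c t) :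
    HomogeneousOn (-1) (gradient F) S := by
  intro x hx t ht
  have hcongr : (fun y => F (t • y)) =ᶠ[𝓝 x] fun y => F y - c t := by
    filter_upwards [hS.mem_nhds hx] with y hy using hF y hy t ht
  have hscaled : t • fderiv ℝ F (t • x) = fderiv ℝ F x := by
    rw [← fderiv_comp_smul, hcongr.fderiv_eq, fderiv_sub_const]
  rw [zpow_neg_one, eq_inv_smul_iff₀ ht.ne']
  refine ext_inner_right ℝ fun w => ?_
  rw [real_inner_smul_left, inner_gradient_left, inner_gradient_left, ← hscaled]
  rfl

theorem D3_apply_self (hS : IsOpen S)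
    (hhom : ∀ x ∈ S, ∀ t : ℝ, 0 < t → F (t • x) = F x - c t)
    (hx : x ∈ S) (hF : ContDiffAt ℝ 3 F x) : D3 F x x = (-2 : ℝ) • Hess F x := by
  have hHess : HomogeneousOn (-2) (Hess F) S := (homogeneousOn_gradient hS hhom).fderiv hS
  have heuler := hHess.fderiv_apply_self hx (differentiableAt_Hess hF)
  rwa [Int.cast_neg, Int.cast_ofNat] at heuler

end Barrier

section Gauge

theorem exists_nonneg_smul_sub_mem {V : Type*} [AddCommGroup V] [TopologicalSpace V]
    [IsTopologicalAddGroup V] [Module ℝ V] [ContinuousSMul ℝ V] {K : Set V} {x : V}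
    (hK : ∀ y ∈ K, ∀ t : ℝ, 0 < t → t • y ∈ K) (hx : x ∈ interior K) (h : V) :
    ∃ β : ℝ, 0 ≤ β ∧ β • x - h ∈ K := by
  have hlim : Tendsto (fun s : ℝ => x - s • h) (𝓝[>] 0) (𝓝 x) :=
    (Continuous.tendsto' (by fun_prop) 0 x (by simp)).mono_left nhdsWithin_le_nhds
  obtain ⟨s, hsK, hs : 0 < s⟩ :=
    ((hlim.eventually (mem_interior_iff_mem_nhds.1 hx)).and self_mem_nhdsWithin).exists
  refine ⟨s⁻¹, inv_nonneg.2 hs.le, ?_⟩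
  simpa [smul_sub, hs.ne'] using hK _ hsK s⁻¹ (inv_pos.2 hs)

theorem le_mul_csInf {S : Set ℝ} {a b : ℝ} (ha : 0 ≤ a) (hS : S.Nonempty)
    (h : ∀ β ∈ S, b ≤ a * β) : b ≤ a * sInf S := by
  rw [← smul_eq_mul, ← Real.sInf_smul_of_nonneg ha]
  exact le_csInf hS.smul_set (forall_mem_image.2 h)

theorem neg_two_mul_mink_mul_inner_Hess_le_inner_D3 {K : Set E} {ϑ : ℝ} {F : E → ℝ} {x : E}
    (hK : ∀ y ∈ K, ∀ t : ℝ, 0 < t → t • y ∈ K) (hF : ContDiffOn ℝ 3 F (interior K))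
    (hlog : ∀ y ∈ interior K, ∀ t : ℝ, 0 < t → F (t • y) = F y - ϑ * Real.log t)
    (hNC : NegCurv K F) (hx : x ∈ interior K) (h v : E) :
    -2 * mink K x h * ⟪Hess F x v, v⟫ ≤ ⟪D3 F x h v, v⟫ := by
  have heuler : ⟪D3 F x x v, v⟫ = -2 * ⟪Hess F x v, v⟫ := by
    rw [D3_apply_self isOpen_interior hlog hx (hF.contDiffAt (isOpen_interior.mem_nhds hx))]
    exact real_inner_smul_left _ _ _
  have hHess : 0 ≤ ⟪Hess F x v, v⟫ := by
    linarith [hNC.inner_D3_nonpos hF hx (interior_subset hx) v]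
  have hbound (β : ℝ) (hβ : β • x - h ∈ K) :
      -⟪D3 F x h v, v⟫ ≤ 2 * ⟪Hess F x v, v⟫ * β := by
    have hnonpos := hNC.inner_D3_nonpos hF hx hβ v
    have hexpand : ⟪D3 F x (β • x - h) v, v⟫ = β * ⟪D3 F x x v, v⟫ - ⟪D3 F x h v, v⟫ := by
      simp [D3, inner_sub_left, real_inner_smul_left]
    rw [hexpand, heuler] at hnonpos
    linarith
  have hinf : -⟪D3 F x h v, v⟫ ≤ 2 * ⟪Hess F x v, v⟫ * mink K x h :=
    le_mul_csInf (by positivity) (exists_nonneg_smul_sub_mem hK hx h) fun β hβ => hbound β hβ.2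
  linarith

end Gauge

theorem stmt1_general {K : Set E} {ϑ : ℝ} {F : E → ℝ}
    (hK : ∀ y ∈ K, ∀ t : ℝ, 0 < t → t • y ∈ K) (hF : ContDiffOn ℝ 3 F (interior K))
    (hlog : ∀ y ∈ interior K, ∀ t : ℝ, 0 < t → F (t • y) = F y - ϑ * Real.log t)
    (hNC : NegCurv K F) {x : E} (hx : x ∈ interior K) (h v : E) :
    -2 * mink K x h * ⟪Hess F x v, v⟫ ≤ ⟪D3 F x h v, v⟫ ∧
    ⟪D3 F x h v, v⟫ ≤ 2 * mink K x (-h) * ⟪Hess F x v, v⟫ := by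
  have hlower (w : E) : -2 * mink K x w * ⟪Hess F x v, v⟫ ≤ ⟪D3 F x w v, v⟫ :=
    neg_two_mul_mink_mul_inner_Hess_le_inner_D3 hK hF hlog hNC hx w v
  have hneg : ⟪D3 F x (-h) v, v⟫ = -⟪D3 F x h v, v⟫ := by simp [D3]
  exact ⟨hlower h, by linarith [hlower (-h)]⟩

/-- For a logarithmically homogeneous barrier `F` with negative curvature on a
regular cone `K`, for all `x ∈ int K` and all `h`,
`−2 σₓ(h) F''(x) ⪯ F'''(x;h) ⪯ 2 σₓ(−h) F''(x)` (as symmetric bilinear forms,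
i.e. after evaluating at an arbitrary `v`). -/
theorem stmt1 {n : ℕ} (K : Set (EuclideanSpace ℝ (Fin n))) (ϑ : ℝ)
    (F : EuclideanSpace ℝ (Fin n) → ℝ)
    (hK : IsRegularCone K) (hF : IsLHB K ϑ F) (hNC : NegCurv K F)
    (x : EuclideanSpace ℝ (Fin n)) (hx : x ∈ interior K)
    (h v : EuclideanSpace ℝ (Fin n)) :
    -2 * mink K x h * ⟪Hess F x v, v⟫ ≤ ⟪D3 F x h v, v⟫ ∧
    ⟪D3 F x h v, v⟫ ≤ 2 * mink K x (-h) * ⟪Hess F x v, v⟫ := by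
  obtain ⟨-, -, hsmul, -, -⟩ := hK
  exact stmt1_general (fun y hy t ht => hsmul y hy t ht.le) hF.contDiff hF.log_hom hNC hx h v
end
end

section
/- Let F be a logarithmically homogeneous barrier with negative curvature for a regular cone K ⊂ ℝⁿ. Then for all x, y ∈ int K, (1/(1+σₓ(y−x))²)·F''(x) ⪯ F''(y) ⪯ (1/(1−σₓ(x−y))²)·F''(x). -/
open scoped RealInnerProductSpace
open Set

noncomputable section

variable {E : Type*} [NormedAddCommGroup E] [InnerProductSpace ℝ E] [CompleteSpace E]

/-!
For `u ∈ K` the function `z ↦ F (z + s u)` moves from `F z` to `F (z + u)` with velocity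
`⟨F'(z + s u), u⟩`, which is concave in `z`. Hence `z ↦ F (z + u) - F z` is concave and its Hessian
`F''(z + u) - F''(z)` is negative semidefinite: `F''` is antitone for the order induced by `K`.
Logarithmic homogeneity gives `F''(r x) = r⁻² F''(x)`. Since `K` is closed, the gauge is attained,
so that `(1 - σₓ(x - y)) x ≤ y ≤ (1 + σₓ(y - x)) x` in the order of `K`, and both bounds follow.
-/

open Filter Topology

section ConvexCone

variable {V : Type*} [AddCommGroup V] [Module ℝ V] [TopologicalSpace V]

open scoped Pointwise in
theorem add_mem_interior_convexCone [IsTopologicalAddGroup V] (C : ConvexCone ℝ V) {x u : V}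
    (hx : x ∈ interior (C : Set V)) (hu : u ∈ C) : x + u ∈ interior (C : Set V) := by
  have hadd : (C : Set V) + C ⊆ C := add_subset_iff.2 fun _ ha _ hb => C.add_mem ha hb
  exact interior_mono hadd (subset_interior_add_left (add_mem_add hx hu))

open scoped Pointwise in
theorem smul_mem_interior_convexCone [ContinuousConstSMul ℝ V] (C : ConvexCone ℝ V) {x : V}
    (hx : x ∈ interior (C : Set V)) {r : ℝ} (hr : 0 < r) : r • x ∈ interior (C : Set V) := by
  have hsmul : r • (C : Set V) ⊆ C := smul_set_subset_iff.2 fun _ ha => C.smul_mem hr ha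
  exact interior_mono hsmul (interior_smul₀ hr.ne' (C : Set V) ▸ smul_mem_smul_set hx)

theorem add_smul_mem_interior_convexCone [IsTopologicalAddGroup V] (C : ConvexCone ℝ V) {x u : V}
    (hx : x ∈ interior (C : Set V)) (hu : u ∈ C) {t : ℝ} (ht : 0 ≤ t) :
    x + t • u ∈ interior (C : Set V) := by
  obtain rfl | ht := ht.eq_or_lt
  · simpa using hx
  · exact add_mem_interior_convexCone C hx (C.smul_mem ht hu)

theorem eventually_add_smul_mem_interior [ContinuousAdd V] [ContinuousSMul ℝ V] {s : Set V} {x : V}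
    (hx : x ∈ interior s) (v : V) : ∀ᶠ t : ℝ in 𝓝 0, x + t • v ∈ interior s := by
  have hline : ContinuousAt (fun t : ℝ => x + t • v) 0 := by fun_prop
  exact hline.eventually_mem (isOpen_interior.mem_nhds (by simpa using hx))

end ConvexCone

section Gauge

variable {V : Type*} [NormedAddCommGroup V] [InnerProductSpace ℝ V]

/-- A regular cone bundled as a Mathlib `ConvexCone` with the same carrier, forgetting closedness,
pointedness and solidity, so that results on convex cones apply to it. -/
def IsRegularCone.toConvexCone {K : Set V} (hK : IsRegularCone K) : ConvexCone ℝ V where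
  carrier := K
  smul_mem' r hr x hx := hK.2.2.1 x hx r hr.le
  add_mem' x hx y hy := by
    have hmid : (1 / 2 : ℝ) • x + (1 / 2 : ℝ) • y ∈ K :=
      hK.2.1 hx hy (by norm_num) (by norm_num) (by norm_num)
    convert hK.2.2.1 _ hmid 2 zero_le_two using 1
    module

theorem mink_nonneg (K : Set V) (x h : V) : 0 ≤ mink K x h :=
  Real.sInf_nonneg fun _ hβ => hβ.1

theorem mink_sub_lt_one {K : Set V} {y : V} (hy : y ∈ interior K) (x : V) :
    mink K x (x - y) < 1 := by
  obtain ⟨t, ⟨hyt, ht1⟩, ht0⟩ :=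
    (((eventually_add_smul_mem_interior hy (-x)).and (eventually_lt_nhds one_pos)).filter_mono
      nhdsWithin_le_nhds |>.and (eventually_mem_nhdsWithin (s := Ioi (0 : ℝ)))).exists
  have hmem : (1 - t) • x - (x - y) ∈ K := by
    convert interior_subset hyt using 1
    module
  calc mink K x (x - y) ≤ 1 - t := csInf_le ⟨0, fun _ hβ => hβ.1⟩ ⟨by linarith, hmem⟩
    _ < 1 := sub_lt_self 1 ht0

theorem exists_nonneg_smul_sub_mem_s2 (C : ConvexCone ℝ V) {x : V} (hx : x ∈ interior (C : Set V))
    (h : V) : ∃ β : ℝ, 0 ≤ β ∧ β • x - h ∈ C := by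
  obtain ⟨t, hxt, ht_mem⟩ :=
    ((eventually_add_smul_mem_interior hx (-h)).filter_mono nhdsWithin_le_nhds |>.and
      (eventually_mem_nhdsWithin (s := Ioi (0 : ℝ)))).exists
  have ht : 0 < t := ht_mem
  refine ⟨t⁻¹, (inv_pos.2 ht).le, ?_⟩
  convert C.smul_mem (inv_pos.2 ht) (interior_subset hxt) using 1
  rw [smul_add, inv_smul_smul₀ ht.ne', sub_eq_add_neg]

theorem mink_smul_sub_mem {C : ConvexCone ℝ V} (hC : IsClosed (C : Set V)) {x : V}
    (hx : x ∈ interior (C : Set V)) (h : V) : mink C x h • x - h ∈ C := by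
  have hclosed : IsClosed {β : ℝ | 0 ≤ β ∧ β • x - h ∈ (C : Set V)} :=
    isClosed_Ici.inter (hC.preimage (by fun_prop : Continuous fun β : ℝ => β • x - h))
  exact (hclosed.csInf_mem (exists_nonneg_smul_sub_mem_s2 C hx h) ⟨0, fun _ hβ => hβ.1⟩).2

end Gauge

section Hessian

theorem gradient_comp_add_right (f : E → ℝ) (a x : E) :
    gradient (fun y => f (y + a)) x = gradient f (x + a) := by
  rw [gradient, gradient, fderiv_comp_add_right]

theorem gradient_comp_smul (f : E → ℝ) (r : ℝ) (x : E) :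
    gradient (fun y => f (r • y)) x = r • gradient f (r • x) := by
  simp [gradient, fderiv_comp_smul]

theorem hess_comp_add_right (f : E → ℝ) (a x : E) :
    Hess (fun y => f (y + a)) x = Hess f (x + a) := by
  simp only [Hess, gradient_comp_add_right, fderiv_comp_add_right a (f := gradient f)]

theorem hess_comp_smul (f : E → ℝ) (r : ℝ) (x : E) :
    Hess (fun y => f (r • y)) x = r ^ 2 • Hess f (r • x) := by
  rw [Hess, funext (gradient_comp_smul f r), ← Pi.smul_def, fderiv_const_smul_field, Pi.smul_apply,
    fderiv_comp_smul (f := gradient f), smul_smul, ← sq]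
  rfl

theorem hess_add_const (f : E → ℝ) (c : ℝ) (x : E) : Hess (fun y => f y + c) x = Hess f x := by
  simp only [Hess, gradient, fderiv_add_const]

theorem differentiableAt_gradient {f : E → ℝ} {x : E} (hf : ContDiffAt ℝ 2 f x) :
    DifferentiableAt ℝ (gradient f) x :=
  (InnerProductSpace.toDual ℝ E).symm.toContinuousLinearEquiv.differentiableAt.comp x
    ((hf.fderiv_right (m := 1) (by norm_num)).differentiableAt one_ne_zero)

theorem hess_sub {f g : E → ℝ} {x : E} (hf : ContDiffAt ℝ 2 f x) (hg : ContDiffAt ℝ 2 g x) :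
    Hess (fun y => f y - g y) x = Hess f x - Hess g x := by
  have hgrad : gradient (fun y => f y - g y) =ᶠ[𝓝 x] fun y => gradient f y - gradient g y := by
    filter_upwards [hf.eventually (by simp), hg.eventually (by simp)] with y hfy hgy
    simp only [gradient, ← map_sub, fderiv_fun_sub (hfy.differentiableAt two_ne_zero)
      (hgy.differentiableAt two_ne_zero)]
  exact hgrad.fderiv_eq.trans
    (fderiv_fun_sub (differentiableAt_gradient hf) (differentiableAt_gradient hg))

theorem hess_smul_of_eventually_eq_add_const {f : E → ℝ} {r c : ℝ} (hr : r ≠ 0) {x : E}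
    (hf : ∀ᶠ z in 𝓝 x, f (r • z) = f z + c) : Hess f (r • x) = (1 / r ^ 2) • Hess f x := by
  have hscaled : r ^ 2 • Hess f (r • x) = Hess f x := calc
    r ^ 2 • Hess f (r • x) = Hess (fun z => f (r • z)) x := (hess_comp_smul f r x).symm
    _ = Hess (fun z => f z + c) x := (EventuallyEq.gradient hf).fderiv_eq
    _ = Hess f x := hess_add_const f c x
  rw [← hscaled, one_div, inv_smul_smul₀ (pow_ne_zero 2 hr)]

theorem inner_hess_smul_self {K : Set E} {F : E → ℝ} {ϑ : ℝ}
    (hlog : ∀ z ∈ interior K, ∀ t : ℝ, 0 < t → F (t • z) = F z - ϑ * Real.log t)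
    {x : E} (hx : x ∈ interior K) {r : ℝ} (hr : 0 < r) (v : E) :
    ⟪Hess F (r • x) v, v⟫ = 1 / r ^ 2 * ⟪Hess F x v, v⟫ := by
  have hscale : ∀ᶠ z in 𝓝 x, F (r • z) = F z + -(ϑ * Real.log r) := by
    filter_upwards [isOpen_interior.mem_nhds hx] with z hz
    rw [hlog z hz r hr, sub_eq_add_neg]
  rw [hess_smul_of_eventually_eq_add_const hr.ne' hscale, smul_apply,
    real_inner_smul_left]

theorem hasDerivAt_comp_add_smul {f : E → ℝ} {x v : E} {t : ℝ}
    (hf : DifferentiableAt ℝ f (x + t • v)) :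
    HasDerivAt (fun s : ℝ => f (x + s • v)) ⟪gradient f (x + t • v), v⟫ t := by
  have hline : HasDerivAt (fun s : ℝ => x + s • v) v t := by
    simpa using ((hasDerivAt_id t).smul_const v).const_add x
  rw [inner_gradient_left]
  exact hf.hasFDerivAt.comp_hasDerivAt t hline

theorem inner_hess_self_nonpos_of_concaveOn {s : Set E} (hs : IsOpen s) {g : E → ℝ}
    (hconc : ConcaveOn ℝ s g) (hg : ContDiffOn ℝ 2 g s) {x : E} (hx : x ∈ s) (v : E) :
    ⟪Hess g x v, v⟫ ≤ 0 := by
  let T : Set ℝ := {t | x + t • v ∈ s}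
  have hT : T ∈ 𝓝 0 :=
    (hs.preimage (by fun_prop : Continuous fun t : ℝ => x + t • v)).mem_nhds (by simpa using hx)
  have hgT : ∀ t ∈ T,
      HasDerivAt (fun t : ℝ => g (x + t • v)) ⟪gradient g (x + t • v), v⟫ t := fun t ht =>
    hasDerivAt_comp_add_smul ((hg.contDiffAt (hs.mem_nhds ht)).differentiableAt two_ne_zero)
  have hconcT : ConcaveOn ℝ T fun t => g (x + t • v) :=
    (hconc.translate_right x).comp_linearMap (LinearMap.toSpanSingleton ℝ E v)
  have hanti : AntitoneOn (fun t : ℝ => ⟪gradient g (x + t • v), v⟫) T :=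
    (hconcT.antitoneOn_deriv fun t ht => (hgT t ht).differentiableAt).congr
      fun t ht => (hgT t ht).deriv
  have hgrad : HasDerivAt (fun t : ℝ => gradient g (x + t • v)) (Hess g x v) 0 :=
    (differentiableAt_gradient (hg.contDiffAt (hs.mem_nhds hx))).hasFDerivAt.hasLineDerivAt v
  have hderiv : HasDerivAt (fun t : ℝ => ⟪gradient g (x + t • v), v⟫) ⟪Hess g x v, v⟫ 0 := by
    simpa using hgrad.inner ℝ (hasDerivAt_const 0 v)
  rw [← (hderiv.hasDerivWithinAt (s := T)).derivWithin
    (uniqueDiffWithinAt_of_mem_nhds hT)]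
  exact hanti.derivWithin_nonpos

end Hessian

theorem concaveOn_sub_of_hasDerivAt {V : Type*} [AddCommMonoid V] [Module ℝ V] {s : Set V}
    {f f' : ℝ → V → ℝ} {a b : ℝ} (hab : a ≤ b)
    (hf : ∀ t ∈ Icc a b, ∀ z ∈ s, HasDerivAt (fun r => f r z) (f' t z) t)
    (hf' : ∀ t ∈ Icc a b, ConcaveOn ℝ s (f' t)) : ConcaveOn ℝ s fun z => f b z - f a z := by
  have hs : Convex ℝ s := (hf' a (left_mem_Icc.2 hab)).1
  refine ⟨hs, fun x hx y hy p q hp hq hpq => ?_⟩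
  let z := p • x + q • y
  let gap : ℝ → ℝ := fun t => f t z - (p * f t x + q * f t y)
  have hgap : ∀ t ∈ Icc a b, HasDerivAt gap (f' t z - (p * f' t x + q * f' t y)) t :=
    fun t ht => (hf t ht z (hs hx hy hp hq hpq)).sub
      (((hf t ht x hx).const_mul p).add ((hf t ht y hy).const_mul q))
  have hmono : MonotoneOn gap (Icc a b) := by
    refine monotoneOn_of_hasDerivWithinAt_nonneg (convex_Icc a b)
      (fun t ht => (hgap t ht).continuousAt.continuousWithinAt)
      (fun t ht => (hgap t (interior_subset ht)).hasDerivWithinAt) fun t ht => ?_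
    exact sub_nonneg.2 ((hf' t (interior_subset ht)).2 hx hy hp hq hpq)
  have hle : gap a ≤ gap b := hmono (left_mem_Icc.2 hab) (right_mem_Icc.2 hab) hab
  simp only [gap, z, smul_eq_mul] at hle ⊢
  linarith

section NegativeCurvature

variable {C : ConvexCone ℝ E} {F : E → ℝ}

theorem concaveOn_translate_sub_of_negCurv (hF : DifferentiableOn ℝ F (interior C))
    (hNC : NegCurv (C : Set E) F) {u : E} (hu : u ∈ C) :
    ConcaveOn ℝ (interior C) fun z => F (z + u) - F z := by
  have hmem : ∀ t ∈ Icc (0 : ℝ) 1, ∀ z ∈ interior (C : Set E), z + t • u ∈ interior (C : Set E) :=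
    fun t ht z hz => add_smul_mem_interior_convexCone C hz hu ht.1
  have hderiv : ∀ t ∈ Icc (0 : ℝ) 1, ∀ z ∈ interior (C : Set E),
      HasDerivAt (fun s : ℝ => F (z + s • u)) ⟪gradient F (z + t • u), u⟫ t := fun t ht z hz =>
    hasDerivAt_comp_add_smul (hF.differentiableAt (isOpen_interior.mem_nhds (hmem t ht z hz)))
  have hconc : ∀ t ∈ Icc (0 : ℝ) 1,
      ConcaveOn ℝ (interior C) fun z => ⟪gradient F (z + t • u), u⟫ := fun t ht =>
    ((hNC u hu).translate_left (t • u)).subset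
      (fun z hz => by simpa only [mem_preimage, add_comm] using hmem t ht z hz) (hNC u hu).1
  simpa using concaveOn_sub_of_hasDerivAt zero_le_one hderiv hconc

theorem inner_hess_self_le_of_sub_mem (hF : ContDiffOn ℝ 2 F (interior C))
    (hNC : NegCurv (C : Set E) F) {x y : E} (hx : x ∈ interior (C : Set E)) (hxy : y - x ∈ C)
    (v : E) : ⟪Hess F y v, v⟫ ≤ ⟪Hess F x v, v⟫ := by
  obtain ⟨u, rfl⟩ : ∃ u, y = x + u := ⟨y - x, by abel⟩
  rw [add_sub_cancel_left] at hxy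
  have hFC : ∀ z ∈ interior (C : Set E), ContDiffAt ℝ 2 F z := fun z hz =>
    hF.contDiffAt (isOpen_interior.mem_nhds hz)
  have htrans : ∀ z ∈ interior (C : Set E), ContDiffAt ℝ 2 (fun w => F (w + u)) z := fun z hz =>
    (hFC _ (add_mem_interior_convexCone C hz hxy)).comp z (by fun_prop)
  have hnonpos := inner_hess_self_nonpos_of_concaveOn isOpen_interior
    (concaveOn_translate_sub_of_negCurv (hF.differentiableOn two_ne_zero) hNC hxy)
    (fun z hz => ((htrans z hz).sub (hFC z hz)).contDiffWithinAt) hx v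
  rwa [hess_sub (htrans x hx) (hFC x hx), hess_comp_add_right, sub_apply,
    inner_sub_left, sub_nonpos] at hnonpos

end NegativeCurvature

theorem stmt2_general (C : ConvexCone ℝ E) (hC : IsClosed (C : Set E)) (ϑ : ℝ) (F : E → ℝ)
    (hF : ContDiffOn ℝ 2 F (interior C))
    (hlog : ∀ z ∈ interior (C : Set E), ∀ t : ℝ, 0 < t → F (t • z) = F z - ϑ * Real.log t)
    (hNC : NegCurv (C : Set E) F) (x : E) (hx : x ∈ interior (C : Set E))
    (y : E) (hy : y ∈ interior (C : Set E)) (v : E) :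
    (1 / (1 + mink C x (y - x)) ^ 2) * ⟪Hess F x v, v⟫ ≤ ⟪Hess F y v, v⟫ ∧
    ⟪Hess F y v, v⟫ ≤ (1 / (1 - mink C x (x - y)) ^ 2) * ⟪Hess F x v, v⟫ := by
  have hpos_add : 0 < 1 + mink C x (y - x) := by linarith [mink_nonneg (C : Set E) x (y - x)]
  have hpos_sub : 0 < 1 - mink C x (x - y) := sub_pos.2 (mink_sub_lt_one hy x)
  have hle_add : (1 + mink C x (y - x)) • x - y ∈ C := by
    convert mink_smul_sub_mem hC hx (y - x) using 1
    module
  have hsub_le : y - (1 - mink C x (x - y)) • x ∈ C := by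
    convert mink_smul_sub_mem hC hx (x - y) using 1
    module
  rw [← inner_hess_smul_self hlog hx hpos_add, ← inner_hess_smul_self hlog hx hpos_sub]
  exact ⟨inner_hess_self_le_of_sub_mem hF hNC hy hle_add v,
    inner_hess_self_le_of_sub_mem hF hNC (smul_mem_interior_convexCone C hx hpos_sub) hsub_le v⟩

/-- For a logarithmically homogeneous barrier `F` with negative curvature on a
regular cone `K`, for all `x, y ∈ int K`,
`(1/(1+σₓ(y−x))²) F''(x) ⪯ F''(y) ⪯ (1/(1−σₓ(x−y))²) F''(x)` (as quadratic forms). -/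
theorem stmt2 {n : ℕ} (K : Set (EuclideanSpace ℝ (Fin n))) (ϑ : ℝ)
    (F : EuclideanSpace ℝ (Fin n) → ℝ)
    (hK : IsRegularCone K) (hF : IsLHB K ϑ F) (hNC : NegCurv K F)
    (x : EuclideanSpace ℝ (Fin n)) (hx : x ∈ interior K)
    (y : EuclideanSpace ℝ (Fin n)) (hy : y ∈ interior K)
    (v : EuclideanSpace ℝ (Fin n)) :
    (1 / (1 + mink K x (y - x))^2) * ⟪Hess F x v, v⟫ ≤ ⟪Hess F y v, v⟫ ∧
    ⟪Hess F y v, v⟫ ≤ (1 / (1 - mink K x (x - y))^2) * ⟪Hess F x v, v⟫ := by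
  exact stmt2_general hK.toConvexCone hK.1 ϑ F (hF.contDiff.of_le (by norm_num)) hF.log_hom hNC
    x hx y hy v
end
end

section
/- Let n ≥ 2, τ_n = √(n/(n−1)), and ρ_n = (τ_n+1)²/(τ_n(τ_n+2)). Then the infimum over all v ∈ ℝⁿ with v_i > 0 for all i of the quantity (min_i v_i)·(Σ_{j=1}^n 1/v_j − n(n−1)/(Σ_{j=1}^n v_j)) equals 1/ρ_n, and it is attained at v = (τ_n+1, …, τ_n+1, 1). -/
open scoped BigOperators

/-!
Fix a coordinate `a = v k` and let `T`, `R` be the sums of `v i`, `1 / v i` over the other `n - 1`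
coordinates. With `(n - 1) τ² = n`, the quantity `a (1 / a + R - n (n - 1) / (a + T))` exceeds
`τ (τ + 2) / (τ + 1)²` by a positive multiple of the square `(T - (n - 1) (τ + 1) a)²` plus
`a (R - (n - 1)² / T)`. The latter is nonnegative by Cauchy–Schwarz and vanishes when the other
coordinates agree. So the bound holds for every coordinate, in particular for the smallest one.
-/

theorem cast_card_compl_singleton {ι R : Type*} [Fintype ι] [DecidableEq ι] [AddGroupWithOne R]
    (k : ι) : (({k}ᶜ : Finset ι).card : R) = Fintype.card ι - 1 := by
  rw [Finset.card_compl, Finset.card_singleton, Nat.cast_pred (Fintype.card_pos_iff.mpr ⟨k⟩)]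

theorem nontrivial_of_card_sub_one_mul_sq_eq_card {ι R : Type*} [Fintype ι] [Nonempty ι] [Ring R]
    [Nontrivial R] {τ : R} (hτ : ((Fintype.card ι : R) - 1) * τ ^ 2 = Fintype.card ι) :
    Nontrivial ι := by
  refine Fintype.one_lt_card_iff_nontrivial.mp (lt_of_le_of_ne Fintype.card_pos fun h => ?_)
  simp [← h] at hτ

theorem sq_card_div_sum_le_sum_one_div {ι K : Type*} [Semifield K] [LinearOrder K]
    [IsStrictOrderedRing K] [ExistsAddOfLE K] (s : Finset ι) {v : ι → K}
    (hv : ∀ i ∈ s, 0 < v i) :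
    (s.card : K) ^ 2 / ∑ i ∈ s, v i ≤ ∑ i ∈ s, 1 / v i := by
  simpa using Finset.sq_sum_div_le_sum_sq_div s (fun _ => (1 : K)) hv

section Field

variable {ι K : Type*} [Fintype ι] [Field K]

/-- The factor `∑ 1 / v_j - n (n - 1) / ∑ v_j` that multiplies `min v` in the minimization
problem, where `n` is the cardinality of the index type. -/
def reciprocalGap (v : ι → K) : K :=
  ∑ j, 1 / v j - Fintype.card ι * (Fintype.card ι - 1) / ∑ j, v j

theorem mul_one_div_add_sub_eq_add_sq_div {n τ a T : K} (R : K) (hτ : (n - 1) * τ ^ 2 = n)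
    (ha : a ≠ 0) (hT : T ≠ 0) (haT : a + T ≠ 0) :
    a * (1 / a + R - n * (n - 1) / (a + T)) =
      τ * (τ + 2) / (τ + 1) ^ 2
        + (T - (n - 1) * (τ + 1) * a) ^ 2 / ((τ + 1) ^ 2 * T * (a + T))
        + a * (R - (n - 1) ^ 2 / T) := by
  have hτ1 : τ + 1 ≠ 0 := by
    intro h
    rw [eq_neg_of_add_eq_zero_left h] at hτ
    exact one_ne_zero (α := K) (by linear_combination -hτ)
  field_simp
  linear_combination -a * T * hτ

theorem mul_reciprocalGap_eq_add_sq_div [DecidableEq ι] {v : ι → K} {τ : K} (k : ι)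
    (hτ : ((Fintype.card ι : K) - 1) * τ ^ 2 = Fintype.card ι)
    (hk : v k ≠ 0) (hcompl : ∑ i ∈ {k}ᶜ, v i ≠ 0) (hsum : ∑ i, v i ≠ 0) :
    v k * reciprocalGap v =
      τ * (τ + 2) / (τ + 1) ^ 2
        + (∑ i ∈ {k}ᶜ, v i - (Fintype.card ι - 1) * (τ + 1) * v k) ^ 2
          / ((τ + 1) ^ 2 * (∑ i ∈ {k}ᶜ, v i) * ∑ i, v i)
        + v k * (∑ i ∈ {k}ᶜ, 1 / v i - (Fintype.card ι - 1) ^ 2 / ∑ i ∈ {k}ᶜ, v i) := by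
  rw [Fintype.sum_eq_add_sum_compl k v] at hsum
  rw [reciprocalGap, Fintype.sum_eq_add_sum_compl k v,
    Fintype.sum_eq_add_sum_compl k fun i => 1 / v i]
  exact mul_one_div_add_sub_eq_add_sq_div _ hτ hk hcompl hsum

end Field

section OrderedField

variable {ι K : Type*} [Fintype ι] [Field K] [LinearOrder K] [IsStrictOrderedRing K]
  {v : ι → K} {τ : K}

theorem le_mul_reciprocalGap (hτ : ((Fintype.card ι : K) - 1) * τ ^ 2 = Fintype.card ι)
    (hv : ∀ i, 0 < v i) (k : ι) :
    τ * (τ + 2) / (τ + 1) ^ 2 ≤ v k * reciprocalGap v := by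
  classical
  have : Nonempty ι := ⟨k⟩
  have : Nontrivial ι := nontrivial_of_card_sub_one_mul_sq_eq_card hτ
  have hcompl : 0 < ∑ i ∈ {k}ᶜ, v i := Finset.sum_pos (fun i _ => hv i) (by
    obtain ⟨i, hi⟩ := exists_ne k
    exact ⟨i, by simpa using hi⟩)
  have hsum : 0 < ∑ i, v i := Finset.sum_pos (fun i _ => hv i) Finset.univ_nonempty
  have cauchy_schwarz := sq_card_div_sum_le_sum_one_div {k}ᶜ fun i _ => hv i
  rw [cast_card_compl_singleton] at cauchy_schwarz
  rw [mul_reciprocalGap_eq_add_sq_div k hτ (hv k).ne' hcompl.ne' hsum.ne', add_assoc]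
  exact le_add_of_nonneg_right
    (add_nonneg (by positivity) (mul_nonneg (hv k).le (sub_nonneg.mpr cauchy_schwarz)))

theorem mul_reciprocalGap_eq_of_forall_ne
    (hτ : ((Fintype.card ι : K) - 1) * τ ^ 2 = Fintype.card ι) (hτ0 : 0 < τ) {k : ι}
    (hk : 0 < v k) (hv : ∀ i, i ≠ k → v i = (τ + 1) * v k) :
    v k * reciprocalGap v = τ * (τ + 2) / (τ + 1) ^ 2 := by
  classical
  have : Nonempty ι := ⟨k⟩
  have : Nontrivial ι := nontrivial_of_card_sub_one_mul_sq_eq_card hτ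
  have hcard : 0 < (Fintype.card ι : K) - 1 := sub_pos.mpr (mod_cast Fintype.one_lt_card)
  have hv' : ∀ i ∈ ({k}ᶜ : Finset ι), v i = (τ + 1) * v k := fun i hi => hv i (by simpa using hi)
  have hcompl : ∑ i ∈ {k}ᶜ, v i = (Fintype.card ι - 1) * (τ + 1) * v k := by
    rw [Finset.sum_congr rfl hv', Finset.sum_const, nsmul_eq_mul, cast_card_compl_singleton,
      mul_assoc]
  have hcompl_inv : ∑ i ∈ {k}ᶜ, 1 / v i = (Fintype.card ι - 1) * (1 / ((τ + 1) * v k)) := by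
    rw [Finset.sum_congr rfl fun i hi => by rw [hv' i hi], Finset.sum_const, nsmul_eq_mul,
      cast_card_compl_singleton]
  have hcompl_pos : 0 < ∑ i ∈ {k}ᶜ, v i := by rw [hcompl]; positivity
  have hsum : 0 < ∑ i, v i := by rw [Fintype.sum_eq_add_sum_compl k]; positivity
  rw [mul_reciprocalGap_eq_add_sq_div k hτ hk.ne' hcompl_pos.ne' hsum.ne', hcompl, hcompl_inv]
  field_simp
  ring

end OrderedField

section Real

variable {ι : Type*} [Fintype ι] {v : ι → ℝ} {τ : ℝ}

theorem le_iInf_mul_reciprocalGap [Nonempty ι]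
    (hτ : ((Fintype.card ι : ℝ) - 1) * τ ^ 2 = Fintype.card ι) (hv : ∀ i, 0 < v i) :
    τ * (τ + 2) / (τ + 1) ^ 2 ≤ (⨅ i, v i) * reciprocalGap v := by
  obtain ⟨k, hk⟩ := exists_eq_ciInf_of_finite (f := v)
  exact hk ▸ le_mul_reciprocalGap hτ hv k

theorem iInf_mul_reciprocalGap_eq_of_forall_ne
    (hτ : ((Fintype.card ι : ℝ) - 1) * τ ^ 2 = Fintype.card ι) (hτ0 : 0 < τ) {k : ι}
    (hk : 0 < v k) (hv : ∀ i, i ≠ k → v i = (τ + 1) * v k) :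
    (⨅ i, v i) * reciprocalGap v = τ * (τ + 2) / (τ + 1) ^ 2 := by
  have hmin : IsLeast (Set.range v) (v k) := by
    refine ⟨⟨k, rfl⟩, Set.forall_mem_range.mpr fun i => ?_⟩
    obtain rfl | hi := eq_or_ne i k
    · exact le_rfl
    · rw [hv i hi]
      exact le_mul_of_one_le_left hk.le (by linarith)
  rw [iInf, hmin.csInf_eq, mul_reciprocalGap_eq_of_forall_ne hτ hτ0 hk hv]

end Real

theorem sub_one_mul_sq_sqrt_div_sub_one {x : ℝ} (hx : 1 < x) :
    (x - 1) * √(x / (x - 1)) ^ 2 = x := by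
  have hx1 : 0 < x - 1 := sub_pos.mpr hx
  rw [Real.sq_sqrt (by positivity), mul_div_cancel₀ _ hx1.ne']

/-- For `n ≥ 2`, `τ_n = √(n/(n−1))`, `ρ_n = (τ_n+1)²/(τ_n(τ_n+2))`, the
infimum over `v ∈ ℝⁿ` with positive components of
`(min_i v_i)(Σ_j 1/v_j − n(n−1)/Σ_j v_j)` equals `1/ρ_n` (stated as `IsLeast`, so the
infimum is attained), and it is attained at `v = (τ_n+1, …, τ_n+1, 1)`. -/
theorem stmt10 (n : ℕ) (hn : 2 ≤ n) :
    let τ : ℝ := Real.sqrt ((n : ℝ) / ((n : ℝ) - 1))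
    let ρ : ℝ := (τ + 1)^2 / (τ * (τ + 2))
    IsLeast {r : ℝ | ∃ v : Fin n → ℝ, (∀ i, 0 < v i) ∧
        r = (⨅ i, v i) * ((∑ j, 1 / v j) - (n : ℝ) * ((n : ℝ) - 1) / (∑ j, v j))}
      (1 / ρ) ∧
    (let v : Fin n → ℝ := fun i => if (i : ℕ) = n - 1 then 1 else τ + 1
     (⨅ i, v i) * ((∑ j, 1 / v j) - (n : ℝ) * ((n : ℝ) - 1) / (∑ j, v j)) = 1 / ρ) := by
  intro τ ρ
  have hn1 : (1 : ℝ) < n := mod_cast hn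
  have hτ : ((Fintype.card (Fin n) : ℝ) - 1) * τ ^ 2 = Fintype.card (Fin n) := by
    rw [Fintype.card_fin]
    exact sub_one_mul_sq_sqrt_div_sub_one hn1
  have hτ0 : 0 < τ := Real.sqrt_pos.mpr (div_pos (by linarith) (sub_pos.mpr hn1))
  have hρ : 1 / ρ = τ * (τ + 2) / (τ + 1) ^ 2 := one_div_div _ _
  have hgap (v : Fin n → ℝ) :
      (∑ j, 1 / v j) - (n : ℝ) * ((n : ℝ) - 1) / (∑ j, v j) = reciprocalGap v := by
    rw [reciprocalGap, Fintype.card_fin]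
  simp only [hgap, hρ]
  have : NeZero n := ⟨by omega⟩
  have hattained := iInf_mul_reciprocalGap_eq_of_forall_ne
    (v := fun i : Fin n => if (i : ℕ) = n - 1 then 1 else τ + 1) (k := ⟨n - 1, by omega⟩)
    hτ hτ0 (by simp) (fun i hi => by simp [Fin.ext_iff.not.mp hi])
  refine ⟨⟨⟨_, fun i => ?_, hattained.symm⟩, ?_⟩, hattained⟩
  · split_ifs <;> positivity
  · rintro _ ⟨v, hv, rfl⟩
    exact le_iInf_mul_reciprocalGap hτ hv
end

section
/- Let n ≥ 2 and let F(x) = −Σ_{i=1}^n ln x_i be the logarithmic barrier on ℝⁿ_{++}. Then for all x, s ∈ ℝⁿ_{++}, 1/min_i(x_i s_i) ≤ ρ_n·(Σ_{i=1}^n 1/(x_i s_i) − n(n−1)/(Σ_{i=1}^n x_i s_i)), and ρ_n is the smallest constant for which this holds for all x, s ∈ ℝⁿ_{++}. Equivalently, the complexity measure ξ̌_F = sup over x, s ∈ ℝⁿ_{++} of λ_max^{1/2}(F''(x)F_*''(s))/δ_F(x,s) equals ρ_n, where λ_max^{1/2}(F''(x)F_*''(s)) = 1/min_i(x_i s_i)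 and δ_F(x,s) = Σ_i 1/(x_i s_i) − n(n−1)/(Σ_i x_i s_i). -/
open scoped BigOperators

/-!
Both sides depend only on the products `u i = x i * s i`. Fix an index `j` and put `m = u j`.
Replacing the other entries by their mean `t` keeps `∑ u i` and, by Cauchy–Schwarz, does not
increase `∑ 1 / u i`, so it suffices to treat one entry `m` and `n - 1` entries `t`. There
`ρ δ - 1 / m` is a nonnegative multiple of `(t - (1 + τ) m) ^ 2`, which proves the bound and shows
that it is attained at `t = (1 + τ) m`.
-/

/-- The number `τ_ν = √(ν / (ν - 1))`, for a real barrier parameter `ν > 1`. -/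
noncomputable def tau (ν : ℝ) : ℝ := √(ν / (ν - 1))

/-- The number `ρ_ν = (τ_ν + 1)² / (τ_ν (τ_ν + 2))`, the value of the complexity measure. -/
noncomputable def rho (ν : ℝ) : ℝ := (tau ν + 1) ^ 2 / (tau ν * (tau ν + 2))

/-- The proximity measure `δ_F(x, s)` of the logarithmic barrier, as a function of the vector `u` of
products `u i = x i * s i`. -/
noncomputable def proximity {ι : Type*} [Fintype ι] (u : ι → ℝ) : ℝ :=
  ∑ i, 1 / u i - (Fintype.card ι : ℝ) * ((Fintype.card ι : ℝ) - 1) / ∑ i, u i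

/-- The proximity measure of a vector with one entry `m` and `ν - 1` entries `t`, where `ν` is
allowed to be real. -/
noncomputable def twoValueProximity (ν m t : ℝ) : ℝ :=
  1 / m + (ν - 1) * (1 / t) - ν * (ν - 1) / (m + (ν - 1) * t)

section TwoValues

variable {ν m t : ℝ}

lemma tau_pos (hν : 1 < ν) : 0 < tau ν :=
  Real.sqrt_pos.mpr (div_pos (by linarith) (by linarith))

lemma sub_one_mul_tau_sq (hν : 1 < ν) : (ν - 1) * tau ν ^ 2 = ν := by
  have hν₁ : 0 < ν - 1 := sub_pos.mpr hν
  rw [tau, Real.sq_sqrt (div_nonneg (by linarith) hν₁.le), mul_div_cancel₀ _ hν₁.ne']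

lemma rho_pos (hν : 1 < ν) : 0 < rho ν := by
  have := tau_pos hν
  unfold rho
  positivity

lemma rho_mul_twoValueProximity_sub_one_div (hν : 1 < ν) (hm : 0 < m) (ht : 0 < t) :
    rho ν * twoValueProximity ν m t - 1 / m =
      (ν - 1) * (t - (1 + tau ν) * m) ^ 2 /
        (tau ν * (tau ν + 2) * m * t * (m + (ν - 1) * t)) := by
  have hτ := tau_pos hν
  have hν₁ : 0 < ν - 1 := sub_pos.mpr hν
  have : 0 < m + (ν - 1) * t := by positivity
  unfold rho twoValueProximity
  field_simp
  linear_combination (-t * m) * sub_one_mul_tau_sq hν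

lemma one_div_le_rho_mul_twoValueProximity (hν : 1 < ν) (hm : 0 < m) (ht : 0 < t) :
    1 / m ≤ rho ν * twoValueProximity ν m t := by
  have hτ := tau_pos hν
  have : 0 < ν - 1 := sub_pos.mpr hν
  rw [← sub_nonneg, rho_mul_twoValueProximity_sub_one_div hν hm ht]
  positivity

lemma rho_mul_twoValueProximity_one_add_tau_mul (hν : 1 < ν) (hm : 0 < m) :
    rho ν * twoValueProximity ν m ((1 + tau ν) * m) = 1 / m := by
  have hτ := tau_pos hν
  rw [← sub_eq_zero, rho_mul_twoValueProximity_sub_one_div hν hm (by positivity)]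
  simp

end TwoValues

lemma card_sq_div_sum_le_sum_one_div {ι : Type*} (S : Finset ι) {u : ι → ℝ}
    (hu : ∀ i ∈ S, 0 < u i) : (S.card : ℝ) ^ 2 / ∑ i ∈ S, u i ≤ ∑ i ∈ S, 1 / u i := by
  simpa using S.sq_sum_div_le_sum_sq_div (fun _ => (1 : ℝ)) hu

lemma iInf_update_const_of_le {ι α : Type*} [DecidableEq ι] [ConditionallyCompleteLattice α]
    (j : ι) {m t : α} (hmt : m ≤ t) :
    ⨅ i, Function.update (fun _ => t) j m i = m := by
  have hle (i : ι) : m ≤ Function.update (fun _ => t) j m i := by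
    rcases eq_or_ne i j with rfl | hij
    · rw [Function.update_self]
    · rwa [Function.update_of_ne hij]
  exact IsLeast.csInf_eq ⟨⟨j, Function.update_self ..⟩, Set.forall_mem_range.mpr hle⟩

section Proximity

variable {ι : Type*} [Fintype ι] [DecidableEq ι]

lemma cast_card_compl_singleton_s11 (j : ι) :
    ((({j}ᶜ : Finset ι).card : ℕ) : ℝ) = (Fintype.card ι : ℝ) - 1 := by
  rw [Finset.card_compl, Finset.card_singleton,
    Nat.cast_pred (Fintype.card_pos_iff.mpr ⟨j⟩)]

lemma sum_comp_update_const {α : Type*} (g : α → ℝ) (j : ι) (m t : α) :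
    ∑ i, g (Function.update (fun _ => t) j m i) =
      g m + ((Fintype.card ι : ℝ) - 1) * g t := by
  have hrest : ∑ i ∈ {j}ᶜ, g (Function.update (fun _ => t) j m i) =
      ∑ _i ∈ ({j}ᶜ : Finset ι), g t :=
    Finset.sum_congr rfl fun _ hi => by
      rw [Function.update_of_ne (by simpa using hi)]
  rw [Fintype.sum_eq_add_sum_compl j, hrest, Function.update_self, Finset.sum_const,
    nsmul_eq_mul, cast_card_compl_singleton_s11]

lemma proximity_update_const (j : ι) (m t : ℝ) :
    proximity (Function.update (fun _ => t) j m) =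
      twoValueProximity (Fintype.card ι) m t := by
  rw [proximity, twoValueProximity, sum_comp_update_const (fun v => 1 / v),
    sum_comp_update_const (fun v => v)]

lemma twoValueProximity_mean_le_proximity [Nontrivial ι] {u : ι → ℝ} (hu : ∀ i, 0 < u i) (j : ι) :
    twoValueProximity (Fintype.card ι) (u j)
      ((∑ i ∈ {j}ᶜ, u i) / ((Fintype.card ι : ℝ) - 1)) ≤ proximity u := by
  have hν : (1 : ℝ) < Fintype.card ι := Nat.one_lt_cast.mpr Fintype.one_lt_card
  have hharmonic := card_sq_div_sum_le_sum_one_div ({j}ᶜ : Finset ι) fun i _ => hu i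
  rw [cast_card_compl_singleton_s11] at hharmonic
  rw [proximity, twoValueProximity, Fintype.sum_eq_add_sum_compl j,
    Fintype.sum_eq_add_sum_compl j u, mul_div_cancel₀ _ (sub_pos.mpr hν).ne', one_div_div,
    mul_div_assoc', ← sq]
  gcongr

lemma rho_mul_proximity_update_one_add_tau_mul [Nontrivial ι] (j : ι) {m : ℝ} (hm : 0 < m) :
    rho (Fintype.card ι) *
        proximity (Function.update (fun _ => (1 + tau (Fintype.card ι)) * m) j m) = 1 / m := by
  rw [proximity_update_const, rho_mul_twoValueProximity_one_add_tau_mul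
    (Nat.one_lt_cast.mpr Fintype.one_lt_card) hm]

end Proximity

section Sharpness

variable {ι : Type*} [Fintype ι] [Nontrivial ι]

theorem one_div_le_rho_mul_proximity {u : ι → ℝ} (hu : ∀ i, 0 < u i) (j : ι) :
    1 / u j ≤ rho (Fintype.card ι) * proximity u := by
  classical
  have hν : (1 : ℝ) < Fintype.card ι := Nat.one_lt_cast.mpr Fintype.one_lt_card
  have hrest : 0 < ∑ i ∈ {j}ᶜ, u i := by
    obtain ⟨i, hij⟩ := exists_ne j
    exact Finset.sum_pos (fun k _ => hu k) ⟨i, by simpa using hij⟩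
  calc 1 / u j
      ≤ rho (Fintype.card ι) * twoValueProximity (Fintype.card ι) (u j)
          ((∑ i ∈ {j}ᶜ, u i) / ((Fintype.card ι : ℝ) - 1)) :=
        one_div_le_rho_mul_twoValueProximity hν (hu j) (div_pos hrest (sub_pos.mpr hν))
    _ ≤ rho (Fintype.card ι) * proximity u :=
        mul_le_mul_of_nonneg_left (twoValueProximity_mean_le_proximity hu j) (rho_pos hν).le

theorem one_div_iInf_le_rho_mul_proximity {u : ι → ℝ} (hu : ∀ i, 0 < u i) :
    1 / (⨅ i, u i) ≤ rho (Fintype.card ι) * proximity u := by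
  obtain ⟨j, hj⟩ := exists_eq_ciInf_of_finite (f := u)
  exact hj ▸ one_div_le_rho_mul_proximity hu j

theorem rho_le_of_forall_one_div_iInf_le {c : ℝ}
    (hc : ∀ u : ι → ℝ, (∀ i, 0 < u i) → 1 / (⨅ i, u i) ≤ c * proximity u) :
    rho (Fintype.card ι) ≤ c := by
  classical
  have hν : (1 : ℝ) < Fintype.card ι := Nat.one_lt_cast.mpr Fintype.one_lt_card
  have hτ := tau_pos hν
  obtain ⟨j⟩ : Nonempty ι := inferInstance
  let u : ι → ℝ := Function.update (fun _ => (1 + tau (Fintype.card ι)) * 1) j 1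
  have hu (i : ι) : 0 < u i := by
    simp only [u, Function.update_apply]
    split_ifs <;> positivity
  have hinf : ⨅ i, u i = 1 := iInf_update_const_of_le j (by linarith)
  have hextremal : rho (Fintype.card ι) * proximity u = 1 / 1 :=
    rho_mul_proximity_update_one_add_tau_mul j one_pos
  have hpos : 0 < proximity u :=
    pos_of_mul_pos_right (hextremal ▸ by norm_num) (rho_pos hν).le
  refine le_of_mul_le_mul_right ?_ hpos
  calc rho (Fintype.card ι) * proximity u
      = 1 / ⨅ i, u i := by rw [hextremal, hinf]
    _ ≤ c * proximity u := hc u hu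

end Sharpness

/-- For the logarithmic barrier `F(x) = −Σ ln xᵢ` on `ℝⁿ₊₊` (`n ≥ 2`):
for all `x, s ∈ ℝⁿ₊₊`,
`1/min_i(xᵢsᵢ) ≤ ρ_n (Σ_i 1/(xᵢsᵢ) − n(n−1)/Σ_i xᵢsᵢ)`, and `ρ_n` is the smallest
constant for which this holds; equivalently, `ξ̌_F = sup λ_max^{1/2}(F''(x)F_*''(s))/δ_F(x,s)
= ρ_n`, where `λ_max^{1/2}(F''(x)F_*''(s)) = 1/min_i(xᵢsᵢ)` and
`δ_F(x,s) = Σ_i 1/(xᵢsᵢ) − n(n−1)/Σ_i xᵢsᵢ`. -/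
theorem stmt11 (n : ℕ) (hn : 2 ≤ n) :
    let τ : ℝ := Real.sqrt ((n : ℝ) / ((n : ℝ) - 1))
    let ρ : ℝ := (τ + 1)^2 / (τ * (τ + 2))
    (∀ x s : Fin n → ℝ, (∀ i, 0 < x i) → (∀ i, 0 < s i) →
      1 / (⨅ i, x i * s i) ≤
        ρ * ((∑ i, 1 / (x i * s i)) - (n : ℝ) * ((n : ℝ) - 1) / (∑ i, x i * s i))) ∧
    (∀ c : ℝ,
      (∀ x s : Fin n → ℝ, (∀ i, 0 < x i) → (∀ i, 0 < s i) →
        1 / (⨅ i, x i * s i) ≤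
          c * ((∑ i, 1 / (x i * s i)) - (n : ℝ) * ((n : ℝ) - 1) / (∑ i, x i * s i))) →
      ρ ≤ c) := by
  intro τ ρ
  have : Nontrivial (Fin n) := Fin.nontrivial_iff_two_le.mpr hn
  have hρ : rho (Fintype.card (Fin n)) = ρ := by rw [Fintype.card_fin]; rfl
  rw [← hρ]
  refine ⟨fun x s hx hs => ?_, fun c hc => rho_le_of_forall_one_div_iInf_le fun u hu => ?_⟩
  · simpa only [proximity, Fintype.card_fin] using
      one_div_iInf_le_rho_mul_proximity fun i => mul_pos (hx i) (hs i)
  · simpa only [proximity, Fintype.card_fin, Pi.one_apply, mul_one] using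
      hc u 1 hu fun _ => one_pos
end

section
/- Let n ≥ 2 and let F(x) = −Σ_{i=1}^n ln x_i on ℝⁿ_{++}. For x, s ∈ ℝⁿ_{++}, let T be the diagonal matrix with entries T_{ii} = s_i/x_i, let x̃ = (1/s_1, …, 1/s_n), s̃ = (1/x_1, …, 1/x_n), and δ = Σ_i 1/(x_i s_i) − n(n−1)/(Σ_i x_i s_i). Then Tx = s, Tx̃ = s̃, and (1/(ρ_n δ))·diag(1/x_i²) ⪯ T ⪯ ρ_n δ·diag(s_i²), i.e., T ∈ T(x,s;ρ_n). -/
open scoped BigOperators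
open Matrix

/-!
Both semidefinite bounds are diagonal, and entrywise each of them says `1 / (xⱼ sⱼ) ≤ ρ δ`.
Put `vᵢ = xᵢ sᵢ`. Sedrakyan's inequality `(∑ wᵢ)² / ∑ vᵢ ≤ ∑ wᵢ² / vᵢ`, with the weight `c` at `j`
and `1` elsewhere, gives `(1 - c²) / vⱼ ≤ ∑ 1 / vᵢ - (n - 1 + c)² / ∑ vᵢ`. The choice
`c = 1 / (τ + 1)` turns `(n - 1 + c)²` into `n (n - 1)` and `1 - c²` into `1 / ρ`.
-/

section Sedrakyan

variable {ι 𝕜 : Type*} [Field 𝕜] [LinearOrder 𝕜] [IsStrictOrderedRing 𝕜]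

theorem one_sub_sq_div_le_sum_one_div_sub {t : Finset ι} {v : ι → 𝕜} (hv : ∀ i ∈ t, 0 < v i)
    {j : ι} (hj : j ∈ t) (c : 𝕜) :
    (1 - c ^ 2) / v j ≤ ∑ i ∈ t, 1 / v i - ((t.card : 𝕜) - 1 + c) ^ 2 / ∑ i ∈ t, v i := by
  classical
  let w : ι → 𝕜 := Function.update 1 j c
  have w_self : w j = c := Function.update_self ..
  have w_of_mem_erase : ∀ i ∈ t.erase j, w i = 1 := fun i hi =>
    Function.update_of_ne (Finset.ne_of_mem_erase hi) ..
  have sum_w : ∑ i ∈ t, w i = (t.card : 𝕜) - 1 + c := by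
    rw [← Finset.sum_erase_add t w hj, Finset.sum_congr rfl w_of_mem_erase, w_self,
      Finset.sum_const, nsmul_one, Finset.cast_card_erase_of_mem hj]
  have sum_w_sq_div : ∑ i ∈ t, w i ^ 2 / v i = ∑ i ∈ t, 1 / v i - (1 - c ^ 2) / v j := by
    rw [← Finset.sum_erase_add t (fun i => w i ^ 2 / v i) hj,
      ← Finset.sum_erase_add t (fun i => 1 / v i) hj, w_self,
      Finset.sum_congr rfl fun i hi => by rw [w_of_mem_erase i hi, one_pow]]
    ring
  have sedrakyan := Finset.sq_sum_div_le_sum_sq_div t w hv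
  rw [sum_w, sum_w_sq_div] at sedrakyan
  exact le_sub_comm.mp sedrakyan

end Sedrakyan

section BarrierConstants

/-- The constant `τ_n = √(n / (n - 1))`, for a real barrier parameter `n`. At `n = 1`
division by zero gives the junk value `0`. -/
noncomputable def barrierTau (n : ℝ) : ℝ :=
  √(n / (n - 1))

/-- The constant `ρ_n = (τ_n + 1)² / (τ_n (τ_n + 2))` that bounds the scaling matrices. -/
noncomputable def barrierRho (n : ℝ) : ℝ :=
  (barrierTau n + 1) ^ 2 / (barrierTau n * (barrierTau n + 2))

variable {n : ℝ}

theorem barrierTau_pos (hn : 1 < n) : 0 < barrierTau n :=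
  Real.sqrt_pos.mpr (div_pos (by linarith) (by linarith))

theorem sub_one_mul_barrierTau_sq (hn : 1 < n) : (n - 1) * barrierTau n ^ 2 = n := by
  have sub_one_pos : 0 < n - 1 := sub_pos.mpr hn
  rw [barrierTau, Real.sq_sqrt (by positivity), mul_div_cancel₀ n sub_one_pos.ne']

theorem barrierRho_pos (hn : 1 < n) : 0 < barrierRho n := by
  have := barrierTau_pos hn
  unfold barrierRho
  positivity

theorem one_sub_one_div_barrierTau_add_one_sq (hn : 1 < n) :
    1 - (1 / (barrierTau n + 1)) ^ 2 = 1 / barrierRho n := by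
  have := barrierTau_pos hn
  unfold barrierRho
  field_simp
  ring

theorem sub_one_add_one_div_barrierTau_add_one_sq (hn : 1 < n) :
    (n - 1 + 1 / (barrierTau n + 1)) ^ 2 = n * (n - 1) := by
  have tau_pos := barrierTau_pos hn
  have tau_sq := sub_one_mul_barrierTau_sq hn
  have one_div_eq : 1 / (barrierTau n + 1) = (n - 1) * (barrierTau n - 1) := by
    rw [div_eq_iff (by positivity)]
    linear_combination -tau_sq
  rw [one_div_eq]
  linear_combination (n - 1) * tau_sq

end BarrierConstants

section BarrierDelta

variable {ι : Type*} [Fintype ι]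

/-- The quantity `δ_F(x, s)` of the logarithmic barrier, as a function of the products
`vᵢ = xᵢ sᵢ`, on which alone it depends. -/
noncomputable def barrierDelta (v : ι → ℝ) : ℝ :=
  ∑ i, 1 / v i - (Fintype.card ι : ℝ) * ((Fintype.card ι : ℝ) - 1) / ∑ i, v i

theorem one_div_le_barrierRho_mul_barrierDelta [Nontrivial ι] {v : ι → ℝ} (hv : ∀ i, 0 < v i)
    (j : ι) : 1 / v j ≤ barrierRho (Fintype.card ι) * barrierDelta v := by
  have one_lt_card : (1 : ℝ) < Fintype.card ι := by exact_mod_cast Fintype.one_lt_card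
  have rho_pos := barrierRho_pos one_lt_card
  have bound := one_sub_sq_div_le_sum_one_div_sub (fun i _ => hv i) (Finset.mem_univ j)
    (1 / (barrierTau (Fintype.card ι) + 1))
  rw [Finset.card_univ, one_sub_one_div_barrierTau_add_one_sq one_lt_card,
    sub_one_add_one_div_barrierTau_add_one_sq one_lt_card] at bound
  calc 1 / v j = barrierRho (Fintype.card ι) * (1 / barrierRho (Fintype.card ι) / v j) := by
        field_simp
    _ ≤ barrierRho (Fintype.card ι) * barrierDelta v :=
        mul_le_mul_of_nonneg_left bound rho_pos.le

end BarrierDelta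

section DiagonalScaling

variable {ι : Type*} [DecidableEq ι]

theorem posSemidef_diagonal_sub_diagonal_iff {R : Type*} [Ring R] [PartialOrder R] [StarRing R]
    [StarOrderedRing R] {a b : ι → R} : (diagonal a - diagonal b).PosSemidef ↔ ∀ i, b i ≤ a i := by
  simp only [diagonal_sub, posSemidef_diagonal_iff, sub_nonneg]

theorem diagonal_div_mulVec_self {𝕜 : Type*} [Field 𝕜] [Fintype ι] {x s : ι → 𝕜}
    (hx : ∀ i, x i ≠ 0) : diagonal (fun i => s i / x i) *ᵥ x = s := by
  ext i
  rw [mulVec_diagonal, div_mul_cancel₀ _ (hx i)]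

theorem diagonal_div_mulVec_one_div {𝕜 : Type*} [Field 𝕜] [Fintype ι] {x s : ι → 𝕜}
    (hs : ∀ i, s i ≠ 0) :
    diagonal (fun i => s i / x i) *ᵥ (fun i => 1 / s i) = fun i => 1 / x i := by
  ext i
  rw [mulVec_diagonal, mul_comm, div_mul_div_cancel₀ (hs i)]

theorem posSemidef_diagonal_div_sub_smul {x s : ι → ℝ} {c : ℝ} (hx : ∀ i, 0 < x i)
    (hs : ∀ i, 0 < s i) (hc : ∀ i, 1 / (x i * s i) ≤ c) :
    (diagonal (fun i => s i / x i) - (1 / c) • diagonal (fun i => 1 / x i ^ 2)).PosSemidef := by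
  rw [← diagonal_smul, posSemidef_diagonal_sub_diagonal_iff]
  intro i
  have x_pos := hx i
  have xs_pos : 0 < x i * s i := mul_pos x_pos (hs i)
  have c_pos : 0 < c := (one_div_pos.mpr xs_pos).trans_le (hc i)
  calc 1 / c * (1 / x i ^ 2) ≤ x i * s i * (1 / x i ^ 2) := by
        gcongr
        exact (one_div_le xs_pos c_pos).mp (hc i)
    _ = s i / x i := by field_simp

theorem posSemidef_smul_diagonal_sq_sub_diagonal_div {x s : ι → ℝ} {c : ℝ} (hx : ∀ i, 0 < x i)
    (hs : ∀ i, 0 < s i) (hc : ∀ i, 1 / (x i * s i) ≤ c) :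
    (c • diagonal (fun i => s i ^ 2) - diagonal (fun i => s i / x i)).PosSemidef := by
  rw [← diagonal_smul, posSemidef_diagonal_sub_diagonal_iff]
  intro i
  have x_pos := hx i
  have s_pos := hs i
  calc s i / x i = 1 / (x i * s i) * s i ^ 2 := by field_simp
    _ ≤ c * s i ^ 2 := mul_le_mul_of_nonneg_right (hc i) (sq_nonneg _)

end DiagonalScaling

/-- For the logarithmic barrier on `ℝⁿ₊₊` (`n ≥ 2`) and `x, s ∈ ℝⁿ₊₊`, the
diagonal matrix `T` with `T_{ii} = sᵢ/xᵢ` satisfies `Tx = s`, `Tx̃ = s̃` where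
`x̃ = (1/s₁,…,1/sₙ)`, `s̃ = (1/x₁,…,1/xₙ)`, and, with
`δ = Σ_i 1/(xᵢsᵢ) − n(n−1)/Σ_i xᵢsᵢ`,
`(1/(ρ_n δ)) diag(1/xᵢ²) ⪯ T ⪯ ρ_n δ diag(sᵢ²)`; `T` is symmetric positive definite,
i.e. `T ∈ 𝒯(x,s;ρ_n)`. -/
theorem stmt12 (n : ℕ) (hn : 2 ≤ n) (x s : Fin n → ℝ)
    (hx : ∀ i, 0 < x i) (hs : ∀ i, 0 < s i) :
    let τ : ℝ := Real.sqrt ((n : ℝ) / ((n : ℝ) - 1))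
    let ρ : ℝ := (τ + 1)^2 / (τ * (τ + 2))
    let δ : ℝ := (∑ i, 1 / (x i * s i)) - (n : ℝ) * ((n : ℝ) - 1) / (∑ i, x i * s i)
    let T : Matrix (Fin n) (Fin n) ℝ := Matrix.diagonal (fun i => s i / x i)
    T.PosDef ∧
    T *ᵥ x = s ∧
    T *ᵥ (fun i => 1 / s i) = (fun i => 1 / x i) ∧
    (T - (1 / (ρ * δ)) • Matrix.diagonal (fun i => 1 / (x i)^2)).PosSemidef ∧
    ((ρ * δ) • Matrix.diagonal (fun i => (s i)^2) - T).PosSemidef := by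
  intro τ ρ δ T
  have : Nontrivial (Fin n) := Fin.nontrivial_iff_two_le.mpr hn
  have one_div_le_rho_mul_delta : ∀ i, 1 / (x i * s i) ≤ ρ * δ := by
    simpa only [barrierRho, barrierTau, barrierDelta, Fintype.card_fin] using
      one_div_le_barrierRho_mul_barrierDelta fun i => mul_pos (hx i) (hs i)
  exact ⟨PosDef.diagonal fun i => div_pos (hs i) (hx i),
    diagonal_div_mulVec_self fun i => (hx i).ne',
    diagonal_div_mulVec_one_div fun i => (hs i).ne',
    posSemidef_diagonal_div_sub_smul hx hs one_div_le_rho_mul_delta,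
    posSemidef_smul_diagonal_sq_sub_diagonal_div hx hs one_div_le_rho_mul_delta⟩
end

section
/- Let n ≥ 2, let F(x) = −Σ_{i=1}^n ln x_i on ℝⁿ_{++}, and fix s ∈ ℝⁿ_{++}, μ > 0, and an index i ∈ {1,…,n}. Define x ∈ ℝⁿ_{++} by x_i = (τ_n/(τ_n+1))·μ/s_i and x_j = τ_n·μ/s_j for j ≠ i. Then the pair (x,s) attains the worst case for the complexity measure: min_j(x_j s_j)·(Σ_j 1/(x_j s_j) − n(n−1)/(Σ_j x_j s_j)) = 1/ρ_n. -/
open scoped BigOperators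

/-!
The measure depends on `(x, s)` only through the products `v j = x j * s j` and is invariant under
scaling of `v`, so the distinguished pair may be replaced by the vector with entry `t = 1 / (τ + 1)`
at `i` and `1` elsewhere. There the measure equals `1 - (n - 1) t (1 - t) / (t + n - 1)`. Its
minimizer over `t ∈ (0, 1]` is the positive root of `t² + 2 (n - 1) t = n - 1`, which is exactly
`1 / (τ + 1)` because `(τ² - 1) (n - 1) = 1`; the value there is `1 - 1 / (τ + 1)²`.
-/

section Update

variable {ι : Type*} [DecidableEq ι]

theorem ciInf_update_of_forall_le {α : Type*} [ConditionallyCompleteLattice α] {f : ι → α} {a : α}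
    (i : ι) (h : ∀ j ≠ i, a ≤ f j) : ⨅ j, Function.update f i a j = a := by
  have isLeast : IsLeast (Set.range (Function.update f i a)) a := by
    refine ⟨⟨i, Function.update_self i a f⟩, ?_⟩
    rintro _ ⟨j, rfl⟩
    exact (le_update_iff (x := fun _ ↦ a)).2 ⟨le_rfl, h⟩ j
  exact isLeast.csInf_eq

theorem sum_update_const {R : Type*} [Ring R] [Fintype ι] (i : ι) (a b : R) :
    ∑ j, Function.update (fun _ ↦ b) i a j = a + ((Fintype.card ι : R) - 1) * b := by
  rw [Finset.sum_update_of_mem (Finset.mem_univ i), Finset.sum_const, nsmul_eq_mul,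
    Finset.card_univ_sdiff, Finset.card_singleton, Nat.cast_pred (Fintype.card_pos_iff.2 ⟨i⟩)]

theorem ite_div_mul_eq_smul_update {K : Type*} [Field K] {s : ι → K} (hs : ∀ j, s j ≠ 0)
    (τ μ : K) (i : ι) :
    (fun j ↦ (if j = i then τ / (τ + 1) * μ / s i else τ * μ / s j) * s j) =
      (τ * μ) • Function.update (1 : ι → K) i (τ + 1)⁻¹ := by
  ext j
  rcases eq_or_ne j i with rfl | hj
  · rw [if_pos rfl, div_mul_cancel₀ _ (hs j), Pi.smul_apply, Function.update_self, smul_eq_mul]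
    ring
  · rw [if_neg hj, div_mul_cancel₀ _ (hs j), Pi.smul_apply, Function.update_of_ne hj,
      Pi.one_apply, smul_eq_mul, mul_one]

end Update

section ComplexityMeasure

variable {ι : Type*} [Fintype ι]

/-- The complexity measure `δ_F(x, s) / λ_max^{1/2}(F''(x) F_*''(s))` of the logarithmic barrier
`F` on the positive orthant, as a function of the vector `v` of products `v j = x j * s j`. -/
noncomputable def complexityMeasure (v : ι → ℝ) : ℝ :=
  (⨅ j, v j) *
    ((∑ j, 1 / v j) - (Fintype.card ι : ℝ) * ((Fintype.card ι : ℝ) - 1) / ∑ j, v j)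

theorem complexityMeasure_smul {c : ℝ} (hc : 0 < c) (v : ι → ℝ) :
    complexityMeasure (c • v) = complexityMeasure v := by
  have sum_one_div : ∑ j, 1 / (c * v j) = c⁻¹ * ∑ j, 1 / v j := by
    simp only [Finset.mul_sum, one_div, mul_inv]
  simp only [complexityMeasure, Pi.smul_apply, smul_eq_mul, sum_one_div,
    ← Real.mul_iInf_of_nonneg hc.le, ← Finset.mul_sum]
  field

variable [DecidableEq ι]

theorem complexityMeasure_update_one {t : ℝ} (i : ι) (ht₀ : 0 < t) (ht₁ : t ≤ 1) :
    complexityMeasure (Function.update 1 i t) =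
      1 - ((Fintype.card ι : ℝ) - 1) * (t * (1 - t)) / (t + (Fintype.card ι - 1)) := by
  have iInf_eq : ⨅ j, Function.update (1 : ι → ℝ) i t j = t :=
    ciInf_update_of_forall_le i fun _ _ ↦ ht₁
  have sum_eq : ∑ j, Function.update (1 : ι → ℝ) i t j = t + (Fintype.card ι - 1) :=
    (sum_update_const i t 1).trans (by rw [mul_one])
  have sum_one_div_eq :
      ∑ j, 1 / Function.update (1 : ι → ℝ) i t j = 1 / t + (Fintype.card ι - 1) := by
    calc
      _ = ∑ j, Function.update (fun _ : ι ↦ (1 : ℝ)) i (1 / t) j := by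
        refine Finset.sum_congr rfl fun j _ ↦ ?_
        simp only [Function.apply_update (fun (_ : ι) (y : ℝ) ↦ 1 / y),
          Pi.one_apply, div_one]
      _ = 1 / t + (Fintype.card ι - 1) := by rw [sum_update_const, mul_one]
  have one_le_card : (1 : ℝ) ≤ Fintype.card ι := by
    exact_mod_cast Fintype.card_pos_iff.2 ⟨i⟩
  have sum_ne_zero : t + ((Fintype.card ι : ℝ) - 1) ≠ 0 := by linarith
  rw [complexityMeasure, iInf_eq, sum_eq, sum_one_div_eq]
  field

theorem complexityMeasure_update_one_inv_add_one {τ : ℝ} (i : ι) (hτ : 0 < τ)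
    (hτ_sq : τ ^ 2 * ((Fintype.card ι : ℝ) - 1) = Fintype.card ι) :
    complexityMeasure (Function.update 1 i (τ + 1)⁻¹) = τ * (τ + 2) / (τ + 1) ^ 2 := by
  have sum_eq : (τ + 1)⁻¹ + ((Fintype.card ι : ℝ) - 1) = τ * (Fintype.card ι - 1) := by
    field_simp
    linear_combination -hτ_sq
  have card_sub_one_ne_zero : (Fintype.card ι : ℝ) - 1 ≠ 0 := by
    intro h
    rw [h, mul_zero] at hτ_sq
    linarith
  rw [complexityMeasure_update_one i (by positivity) (inv_le_one_of_one_le₀ (by linarith)), sum_eq]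
  field

end ComplexityMeasure

theorem sq_sqrt_div_sub_one_mul {a : ℝ} (ha : 1 < a) : √(a / (a - 1)) ^ 2 * (a - 1) = a := by
  have sub_one_pos : 0 < a - 1 := sub_pos.2 ha
  rw [Real.sq_sqrt (by positivity), div_mul_cancel₀ _ sub_one_pos.ne']

/-- For the logarithmic barrier on `ℝⁿ₊₊` (`n ≥ 2`), fix `s ∈ ℝⁿ₊₊`, `μ > 0`,
and an index `i`.  The point `x` with `xᵢ = (τ_n/(τ_n+1)) μ/sᵢ` and `x_j = τ_n μ/s_j` for
`j ≠ i` is positive and attains the worst case for the complexity measure: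
`min_j(x_j s_j) (Σ_j 1/(x_j s_j) − n(n−1)/Σ_j x_j s_j) = 1/ρ_n`. -/
theorem stmt13 (n : ℕ) (hn : 2 ≤ n) (s : Fin n → ℝ) (hs : ∀ j, 0 < s j)
    (μ : ℝ) (hμ : 0 < μ) (i : Fin n) :
    let τ : ℝ := Real.sqrt ((n : ℝ) / ((n : ℝ) - 1))
    let ρ : ℝ := (τ + 1)^2 / (τ * (τ + 2))
    let x : Fin n → ℝ := fun j => if j = i then (τ / (τ + 1)) * μ / s i else τ * μ / s j
    (∀ j, 0 < x j) ∧
    (⨅ j, x j * s j) *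
        ((∑ j, 1 / (x j * s j)) - (n : ℝ) * ((n : ℝ) - 1) / (∑ j, x j * s j)) = 1 / ρ := by
  intro τ ρ x
  have one_lt_n : (1 : ℝ) < n := by exact_mod_cast hn
  have τ_pos : 0 < τ := Real.sqrt_pos.2 (div_pos (by linarith) (by linarith))
  refine ⟨fun j ↦ ?_, ?_⟩
  · have si_pos := hs i
    have sj_pos := hs j
    dsimp only [x]
    split_ifs <;> positivity
  calc
    _ = complexityMeasure fun j ↦ x j * s j := by simp only [complexityMeasure, Fintype.card_fin]
    _ = complexityMeasure (Function.update 1 i (τ + 1)⁻¹) := by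
      rw [ite_div_mul_eq_smul_update fun j ↦ (hs j).ne', complexityMeasure_smul (mul_pos τ_pos hμ)]
    _ = τ * (τ + 2) / (τ + 1) ^ 2 := complexityMeasure_update_one_inv_add_one i τ_pos <| by
      simpa only [Fintype.card_fin] using sq_sqrt_div_sub_one_mul one_lt_n
    _ = 1 / ρ := (one_div_div _ _).symm
end
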